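/- For every complex number $s$ with $\Re s > 0$ and every positive integer $n$, there exists a constant $C$ (depending only on $s$) such that $\left|\sum_{k=1}^{n} k^{s} - \zeta(-s) - \frac{(n+\tfrac12)^{s+1}}{s+1}\right| \leq C\, n^{\Re s - 1}$. -/

import Mathlib

open Filter Topology

/-- The falling factorial of `-w`. -/
noncomputable def emPoch (j : ℕ) (w : ℂ) : ℂ := ∏ i ∈ Finset.range j, (-w - i)

/-- The `j`-th derivative of `x ^ (-w)`. -/
noncomputable def emG (j : ℕ) (w : ℂ) (x : ℝ) : ℂ := emPoch j w * (x : ℂ) ^ (-w - j)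

/-- The remainder integrals. -/
noncomputable def emI (j : ℕ) (w : ℂ) (k : ℕ) : ℂ :=
  ∫ x in (0:ℝ)..1, emG j w (k + x) * (bernoulliFun j x : ℂ)

lemma em_hasDerivAt_cpow {x : ℝ} (hx : 0 < x) (r : ℂ) :
    HasDerivAt (fun y : ℝ => (y : ℂ) ^ r) (r * (x : ℂ) ^ (r - 1)) x := by
  by_cases hr : r = 0
  · subst hr; simpa using hasDerivAt_const x (1:ℂ)
  · exact hasDerivAt_ofReal_cpow_const hx.ne' hr

lemma em_hasDerivAt_cpow_add {a x : ℝ} (hx : 0 < a + x) (r : ℂ) :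
    HasDerivAt (fun y : ℝ => ((a + y : ℝ) : ℂ) ^ r) (r * ((a + x : ℝ) : ℂ) ^ (r - 1)) x := by
  have := (em_hasDerivAt_cpow hx r).comp_const_add a x
  exact this

lemma emG_hasDerivAt (j : ℕ) (w : ℂ) {a x : ℝ} (hx : 0 < a + x) :
    HasDerivAt (fun y => emG j w (a + y)) (emG (j + 1) w (a + x)) x := by
  have := (em_hasDerivAt_cpow_add hx (-w - j)).const_mul (emPoch j w)
  refine this.congr_deriv ?_
  have e : (-w - ((j + 1 : ℕ) : ℂ)) = -w - j - 1 := by push_cast; ring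
  simp only [emG, emPoch, Finset.prod_range_succ]
  rw [e]; ring

lemma emG_continuousOn (j : ℕ) (w : ℂ) {k : ℕ} (hk : 0 < k) :
    ContinuousOn (fun x : ℝ => emG j w (k + x)) (Set.uIcc 0 1) := by
  intro x hx
  rw [Set.uIcc_of_le zero_le_one] at hx
  have : (0:ℝ) < k := by exact_mod_cast hk
  exact (emG_hasDerivAt j w (by linarith [hx.1])).continuousAt.continuousWithinAt

lemma emI_parts (j : ℕ) (w : ℂ) {k : ℕ} (hk : 0 < k) :
    emI j w k = emG j w (k + 1) * ((bernoulliFun (j + 1) 1 / (j + 1) : ℝ) : ℂ)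
      - emG j w k * ((bernoulliFun (j + 1) 0 / (j + 1) : ℝ) : ℂ) - emI (j + 1) w k / (j + 1) := by
  have hk' : (0:ℝ) < k := by exact_mod_cast hk
  have h := intervalIntegral.integral_mul_deriv_eq_deriv_mul (a := 0) (b := 1)
    (u := fun x : ℝ => emG j w (k + x)) (u' := fun x : ℝ => emG (j + 1) w (k + x))
    (v := fun x : ℝ => ((bernoulliFun (j + 1) x / (j + 1) : ℝ) : ℂ))
    (v' := fun x : ℝ => (bernoulliFun j x : ℂ)) ?_ ?_ ?_ ?_
  · rw [emI, h]
    simp only [add_zero]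
    congr 1
    rw [emI, ← intervalIntegral.integral_div]
    congr 1
    ext x
    push_cast
    ring
  · intro x hx
    rw [Set.uIcc_of_le zero_le_one] at hx
    exact emG_hasDerivAt j w (by linarith [hx.1])
  · intro x hx
    exact (antideriv_bernoulliFun j x).ofReal_comp
  · exact (emG_continuousOn (j + 1) w hk).intervalIntegrable
  · exact (Complex.continuous_ofReal.comp (continuous_bernoulliFun j)).intervalIntegrable _ _

lemma emI_zero (w : ℂ) {k : ℕ} (hk : 0 < k) :
    (1 - w) * emI 0 w k = ((k + 1 : ℕ) : ℂ) ^ (1 - w) - (k : ℂ) ^ (1 - w) := by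
  have hk' : (0:ℝ) < k := by exact_mod_cast hk
  have h := intervalIntegral.integral_eq_sub_of_hasDerivAt (a := 0) (b := 1)
    (f := fun x : ℝ => ((k + x : ℝ) : ℂ) ^ (1 - w)) 
    (f' := fun x : ℝ => (1 - w) * (emG 0 w (k + x) * (bernoulliFun 0 x : ℂ))) ?_ ?_
  · rw [emI, ← intervalIntegral.integral_const_mul, h]
    push_cast
    simp
  · intro x hx
    rw [Set.uIcc_of_le zero_le_one] at hx
    have := em_hasDerivAt_cpow_add (a := k) (x := x) (by linarith [hx.1]) (1 - w)
    refine this.congr_deriv ?_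
    simp [emG, emPoch]
  · have := ((emG_continuousOn 0 w hk).intervalIntegrable (μ := MeasureTheory.volume)).const_mul
      (1 - w)
    simpa using this

lemma em_succ (w : ℂ) {k : ℕ} (hk : 0 < k) :
    ((k + 1 : ℕ) : ℂ) ^ (-w) = emI 0 w k + (((k + 1 : ℕ) : ℂ) ^ (-w) - (k : ℂ) ^ (-w)) / 2
      + emI 1 w k := by
  rw [emI_parts 0 w hk]
  simp [emG, emPoch]
  ring

lemma emPoch_differentiable (j : ℕ) : Differentiable ℂ (emPoch j) := by
  unfold emPoch
  fun_prop

lemma emG_differentiable (j : ℕ) {x : ℝ} (hx : 0 < x) :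
    Differentiable ℂ (fun w => emG j w x) := by
  have : (x : ℂ) ≠ 0 := by exact_mod_cast hx.ne'
  intro w
  unfold emG
  refine (emPoch_differentiable j w).mul ?_
  refine DifferentiableAt.const_cpow (by fun_prop) (Or.inl this)

lemma emG_norm (j : ℕ) (w : ℂ) {x : ℝ} (hx : 0 < x) :
    ‖emG j w x‖ = ‖emPoch j w‖ * x ^ (-w.re - j) := by
  rw [emG, norm_mul, Complex.norm_cpow_eq_rpow_re_of_pos hx]
  simp

lemma em_exists (J : ℕ) : ∃ (H : ℂ → ℕ → ℂ) (r : ℂ),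
    (∀ n, 0 < n → Differentiable ℂ (fun w => H w n)) ∧
    (∀ w, ∃ C : ℝ, 0 ≤ C ∧ ∀ n : ℕ, 0 < n → ‖H w n‖ ≤ C * (n : ℝ) ^ (-w.re - 1)) ∧
    (∀ w, ∀ k, 0 < k → emI 1 w k = H w (k + 1) - H w k + r * emI (J + 1) w k) := by
  induction J with
  | zero =>
    refine ⟨fun _ _ => 0, 1, ?_, ?_, ?_⟩
    · intro n hn; fun_prop
    · intro w; exact ⟨0, le_rfl, by simp⟩
    · intro w k hk; simp
  | succ J ih =>
    obtain ⟨H, r, h1, h2, h3⟩ := ih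
    set b : ℂ := ((bernoulliFun (J + 1 + 1) 0 / ((J + 1 : ℕ) + 1) : ℝ) : ℂ) with hb
    refine ⟨fun w n => H w n + r * b * emG (J + 1) w n, -r / ((J + 1 : ℕ) + 1), ?_, ?_, ?_⟩
    · intro n hn
      exact (h1 n hn).add ((emG_differentiable (J + 1) (by exact_mod_cast hn)).const_mul _)
    · intro w
      obtain ⟨C, hC, h⟩ := h2 w
      refine ⟨C + ‖r * b‖ * ‖emPoch (J + 1) w‖, by positivity, fun n hn => ?_⟩
      have hn' : (0:ℝ) < n := by exact_mod_cast hn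
      have hn1 : (1:ℝ) ≤ n := by exact_mod_cast hn
      refine (norm_add_le _ _).trans ?_
      rw [add_mul, norm_mul (r * b), emG_norm _ _ hn', ← mul_assoc]
      gcongr
      · exact h n hn
      · push_cast; linarith [(Nat.cast_nonneg J : (0:ℝ) ≤ J)]
    · intro w k hk
      rw [h3 w k hk, emI_parts (J + 1) w hk, bernoulliFun_endpoints_eq_of_ne_one (by omega), ← hb]
      push_cast
      ring

lemma emI_bound (j : ℕ) : ∃ M : ℝ, 0 ≤ M ∧ ∀ (w : ℂ) (k : ℕ), 0 < k → 0 ≤ w.re + j →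
    ‖emI j w k‖ ≤ M * ‖emPoch j w‖ * (k : ℝ) ^ (-w.re - j) := by
  obtain ⟨M, hM⟩ := (isCompact_Icc (a := (0:ℝ)) (b := 1)).exists_bound_of_continuousOn
    (continuous_bernoulliFun j).continuousOn
  have hM0 : 0 ≤ M := (norm_nonneg _).trans (hM 0 (by simp))
  refine ⟨M, hM0, fun w k hk hw => ?_⟩
  have hk' : (0:ℝ) < k := by exact_mod_cast hk
  have := intervalIntegral.norm_integral_le_of_norm_le_const (a := 0) (b := 1)
    (f := fun x : ℝ => emG j w (k + x) * (bernoulliFun j x : ℂ))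
    (C := M * ‖emPoch j w‖ * (k : ℝ) ^ (-w.re - j)) ?_
  · simpa [emI] using this
  · intro x hx
    rw [Set.uIoc_of_le zero_le_one] at hx
    rw [norm_mul, emG_norm _ _ (by linarith [hx.1])]
    have h1 : ‖(bernoulliFun j x : ℂ)‖ ≤ M := by
      rw [Complex.norm_real]; exact hM x ⟨hx.1.le, hx.2⟩
    have h2 : ((k : ℝ) + x) ^ (-w.re - j) ≤ (k : ℝ) ^ (-w.re - j) :=
      Real.rpow_le_rpow_of_nonpos hk' (by linarith [hx.1]) (by linarith)
    calc _ ≤ ‖emPoch j w‖ * (k : ℝ) ^ (-w.re - j) * M := by gcongr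
      _ = _ := by ring

lemma em_taylor (s : ℂ) (hs : 0 < s.re) : ∃ C : ℝ, ∀ n : ℕ, 0 < n →
    ‖((n : ℂ) + 1 / 2) ^ (s + 1) / (s + 1) - (n : ℂ) ^ (s + 1) / (s + 1) - (n : ℂ) ^ s / 2‖
      ≤ C * (n : ℝ) ^ (s.re - 1) := by
  have hs1 : s + 1 ≠ 0 := by
    intro h
    have := congrArg Complex.re h
    simp at this
    linarith
  refine ⟨‖s‖ * 2 ^ |s.re - 1|, fun n hn => ?_⟩
  have hn' : (0:ℝ) < n := by exact_mod_cast hn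
  have hn1 : (1:ℝ) ≤ n := by exact_mod_cast hn
  set K := ‖s‖ * 2 ^ |s.re - 1| * (n : ℝ) ^ (s.re - 1) with hK
  have hK0 : 0 ≤ K := by positivity
  have hd : ∀ x ∈ Set.Icc (0:ℝ) (1/2), ‖s * (((n : ℝ) + x : ℝ) : ℂ) ^ (s - 1)‖ ≤ K := by
    intro x hx
    have hx0 := hx.1
    have hx1 := hx.2
    rw [norm_mul, Complex.norm_cpow_eq_rpow_re_of_pos (by linarith), hK, mul_assoc]
    gcongr
    have e : (n : ℝ) + x = (1 + x / n) * n := by field_simp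
    have hr1 : 1 ≤ 1 + x / n := by
      have : 0 ≤ x / n := by positivity
      linarith
    have hr2 : 1 + x / n ≤ 2 := by
      have : x / n ≤ 1 := by rw [div_le_one hn']; linarith
      linarith
    rw [e, Real.mul_rpow (by linarith) hn'.le]
    simp only [Complex.sub_re, Complex.one_re]
    gcongr
    calc (1 + x / n) ^ (s.re - 1) ≤ (1 + x / n) ^ |s.re - 1| :=
          Real.rpow_le_rpow_of_exponent_le hr1 (le_abs_self _)
      _ ≤ _ := by gcongr
  have h1 : ∀ x ∈ Set.Icc (0:ℝ) (1/2), ‖(((n : ℝ) + x : ℝ) : ℂ) ^ s - (n : ℂ) ^ s‖ ≤ K := by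
    intro x hx
    have := norm_image_sub_le_of_norm_deriv_le_segment' (a := 0) (b := 1/2) (C := K)
      (f := fun x : ℝ => (((n : ℝ) + x : ℝ) : ℂ) ^ s)
      (f' := fun x : ℝ => s * (((n : ℝ) + x : ℝ) : ℂ) ^ (s - 1))
      (fun x hx => (em_hasDerivAt_cpow_add (by linarith [hx.1]) s).hasDerivWithinAt)
      (fun x hx => hd x ⟨hx.1, hx.2.le⟩) x hx
    have h2 : K * (x - 0) ≤ K := by nlinarith [hx.1, hx.2]
    refine le_trans (le_of_eq ?_) (this.trans h2)
    simp
  have h2 := norm_image_sub_le_of_norm_deriv_le_segment' (a := 0) (b := 1/2) (C := K)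
      (f := fun x : ℝ => (((n : ℝ) + x : ℝ) : ℂ) ^ (s + 1) / (s + 1) - (x : ℂ) * (n : ℂ) ^ s)
      (f' := fun x : ℝ => (((n : ℝ) + x : ℝ) : ℂ) ^ s - (n : ℂ) ^ s)
      (fun x hx => by
        have a1 := (em_hasDerivAt_cpow_add (a := n) (x := x) (by linarith [hx.1]) (s + 1)).div_const
          (s + 1)
        have a2 := ((hasDerivAt_id x).ofReal_comp).mul_const ((n : ℂ) ^ s)
        have a3 := a1.sub a2
        refine HasDerivAt.hasDerivWithinAt ?_
        refine a3.congr_deriv ?_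
        rw [add_sub_cancel_right, mul_div_cancel_left₀ _ hs1]
        simp)
      (fun x hx => h1 x ⟨hx.1, hx.2.le⟩) (1/2) (by norm_num)
  refine le_trans (le_of_eq ?_) (h2.trans (by linarith))
  congr 1
  push_cast
  simp
  ring

/-- Regularised partial sums of `(w - 1) ζ(w)`. -/
noncomputable def emE (H : ℂ → ℕ → ℂ) (w : ℂ) (n : ℕ) : ℂ :=
  (w - 1) * ((∑ k ∈ Finset.Icc 1 n, (k : ℂ) ^ (-w)) - (n : ℂ) ^ (-w) / 2 - H w n)
    + (n : ℂ) ^ (1 - w)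

lemma em_sum_Icc (f : ℕ → ℂ) (n : ℕ) :
    ∑ k ∈ Finset.Icc 1 n, f k = ∑ i ∈ Finset.range n, f (i + 1) := by
  induction n with
  | zero => simp
  | succ n ih => rw [Finset.sum_Icc_succ_top (by omega), Finset.sum_range_succ, ih]

lemma em_cpow_tendsto {a : ℂ} (ha : a.re < 0) :
    Tendsto (fun n : ℕ => (n : ℂ) ^ a) atTop (𝓝 0) := by
  rw [tendsto_zero_iff_norm_tendsto_zero]
  have h := (tendsto_rpow_neg_atTop (neg_pos.mpr ha)).comp (tendsto_natCast_atTop_atTop (R := ℝ))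
  refine h.congr' ?_
  filter_upwards [eventually_gt_atTop 0] with n hn
  have hn' : (0:ℝ) < n := by exact_mod_cast hn
  have := Complex.norm_cpow_eq_rpow_re_of_pos hn' a
  simp at this
  simp [this]

lemma emE_tendsto (H : ℂ → ℕ → ℂ) (w : ℂ) (hw : 1 < w.re) (C : ℝ)
    (hH : ∀ n : ℕ, 0 < n → ‖H w n‖ ≤ C * (n : ℝ) ^ (-w.re - 1)) :
    Tendsto (emE H w) atTop (𝓝 (riemannZeta₁ w)) := by
  have hw1 : w ≠ 1 := by rintro rfl; simp at hw
  have e : riemannZeta₁ w = (w - 1) * (riemannZeta w - 0 / 2 - 0) + 0 := by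
    rw [riemannZeta_eq_inv_sub_mul hw1]
    have := sub_ne_zero.mpr hw1
    field_simp
    ring
  rw [e]
  have t1 : Tendsto (fun n : ℕ => ∑ k ∈ Finset.Icc 1 n, (k : ℂ) ^ (-w)) atTop
      (𝓝 (riemannZeta w)) := by
    have hs : Summable (fun n : ℕ => 1 / (n : ℂ) ^ w) := Complex.summable_one_div_nat_cpow.mpr hw
    have hs' := (summable_nat_add_iff 1).mpr hs
    have := hs'.hasSum.tendsto_sum_nat
    rw [zeta_eq_tsum_one_div_nat_add_one_cpow hw]
    simp only [em_sum_Icc]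
    refine Tendsto.congr ?_ (by simpa using this)
    intro n
    simp [Complex.cpow_neg]
  have t2 : Tendsto (fun n : ℕ => (n : ℂ) ^ (-w)) atTop (𝓝 0) :=
    em_cpow_tendsto (by simp; linarith)
  have t3 : Tendsto (fun n : ℕ => (n : ℂ) ^ (1 - w)) atTop (𝓝 0) :=
    em_cpow_tendsto (by simp; linarith)
  have t4 : Tendsto (H w) atTop (𝓝 0) := by
    have h := ((tendsto_rpow_neg_atTop (y := w.re + 1) (by linarith)).comp
      (tendsto_natCast_atTop_atTop (R := ℝ))).const_mul C
    rw [mul_zero] at h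
    refine squeeze_zero_norm' ?_ h
    filter_upwards [eventually_gt_atTop 0] with n hn
    refine (hH n hn).trans (le_of_eq ?_)
    simp only [Function.comp]
    congr 2
    ring
  exact (((t1.sub (t2.div_const 2)).sub t4).const_mul (w - 1)).add t3

lemma emE_diff (H : ℂ → ℕ → ℂ) {n : ℕ} (hn : 0 < n) (h : Differentiable ℂ (fun w => H w n)) :
    Differentiable ℂ (fun w => emE H w n) := by
  have hc : ∀ k : ℕ, 0 < k → ∀ f : ℂ → ℂ, Differentiable ℂ f →
      Differentiable ℂ (fun w => (k : ℂ) ^ (f w)) := by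
    intro k hk f hf w
    exact (hf w).const_cpow (Or.inl (by exact_mod_cast hk.ne'))
  unfold emE
  refine Differentiable.add (Differentiable.mul (by fun_prop) ?_) (hc n hn _ (by fun_prop))
  refine Differentiable.sub (Differentiable.sub ?_ ?_) h
  · refine Differentiable.fun_sum fun k hk => hc k ?_ _ (by fun_prop)
    exact (Finset.mem_Icc.mp hk).1
  · exact (hc n hn _ (by fun_prop)).div_const 2

lemma emE_step (H : ℂ → ℕ → ℂ) (r : ℂ) (J : ℕ) (w : ℂ) {k : ℕ} (hk : 0 < k)
    (h3 : emI 1 w k = H w (k + 1) - H w k + r * emI (J + 1) w k) :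
    emE H w (k + 1) - emE H w k = (w - 1) * r * emI (J + 1) w k := by
  have h0 := emI_zero w hk
  have h1 := em_succ w hk
  unfold emE
  rw [Finset.sum_Icc_succ_top (by omega)]
  linear_combination (w - 1) * h1 - h0 + (w - 1) * h3

lemma em_main (s : ℂ) (hs : 0 < s.re) : ∃ C : ℝ, ∀ n : ℕ, 0 < n →
    ‖(∑ k ∈ Finset.Icc 1 n, (k : ℂ) ^ s) - riemannZeta (-s) - (n : ℂ) ^ (s + 1) / (s + 1)
      - (n : ℂ) ^ s / 2‖ ≤ C * (n : ℝ) ^ (s.re - 1) := by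
  set J : ℕ := ⌈s.re⌉₊ + 2 with hJ
  have hJs : 1 + s.re < J := by
    have := Nat.le_ceil s.re
    rw [hJ]; push_cast; linarith
  have hJ2 : (2:ℝ) ≤ J := by rw [hJ]; push_cast; linarith [(Nat.cast_nonneg ⌈s.re⌉₊ : (0:ℝ) ≤ _)]
  obtain ⟨H, r, h1, h2, h3⟩ := em_exists J
  obtain ⟨M, hM0, hM⟩ := emI_bound (J + 1)
  set R : ℝ := ‖s‖ + 3 with hR
  obtain ⟨P, hP⟩ := (isCompact_closedBall (0:ℂ) R).exists_bound_of_continuousOn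
    (f := fun w => (w - 1) * r * emPoch (J + 1) w)
    (by have := (emPoch_differentiable (J + 1)).continuous; fun_prop)
  have hP0 : 0 ≤ P := (norm_nonneg _).trans (hP 0 (by simp; positivity))
  set K := M * P with hK
  have hK0 : 0 ≤ K := mul_nonneg hM0 hP0
  set U : Set ℂ := Metric.ball 0 R ∩ {w | 1 - (J:ℝ) < w.re} with hU
  have hUo : IsOpen U := Metric.isOpen_ball.inter (isOpen_lt continuous_const Complex.continuous_re)
  have hUc : Convex ℝ U := (convex_ball _ _).inter (convex_halfSpace_re_gt _)
  -- key bound on increments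
  have hstep : ∀ w ∈ U, ∀ k : ℕ, 0 < k →
      ‖emE H w (k + 1) - emE H w k‖ ≤ K * (k : ℝ) ^ (-w.re - (J + 1)) := by
    intro w hw k hk
    have hw1 : 1 - (J:ℝ) < w.re := hw.2
    rw [emE_step H r J w hk (h3 w k hk), norm_mul]
    have a1 := hM w k hk (by push_cast; linarith)
    have a2 := hP w (Metric.ball_subset_closedBall hw.1)
    rw [norm_mul] at a2
    push_cast at a1
    calc _ ≤ ‖(w - 1) * r‖ * (M * ‖emPoch (J + 1) w‖ * (k : ℝ) ^ (-w.re - (J + 1))) := by gcongr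
      _ = M * (‖(w - 1) * r‖ * ‖emPoch (J + 1) w‖) * (k : ℝ) ^ (-w.re - (J + 1)) := by ring
      _ ≤ _ := by rw [hK]; gcongr
  have hsum : Summable (fun i : ℕ => 1 / ((i : ℝ) + 1) ^ 2) := by
    have := (summable_nat_add_iff 1).mpr (Real.summable_one_div_nat_pow.mpr (one_lt_two))
    simpa using this
  have hFle : ∀ (i : ℕ) (w : ℂ), w ∈ U →
      ‖emE H w (i + 1 + 1) - emE H w (i + 1)‖ ≤ K * (1 / ((i : ℝ) + 1) ^ 2) := by
    intro i w hw
    have hw1 : 1 - (J:ℝ) < w.re := hw.2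
    refine (hstep w hw (i + 1) (by omega)).trans ?_
    gcongr
    push_cast
    rw [one_div, ← Real.rpow_natCast, ← Real.rpow_neg (by positivity)]
    refine Real.rpow_le_rpow_of_exponent_le (by linarith [(Nat.cast_nonneg i : (0:ℝ) ≤ i)]) ?_
    push_cast; linarith
  have hsumK := hsum.mul_left K
  have hZd : DifferentiableOn ℂ (fun w => emE H w 1 +
      ∑' i : ℕ, (emE H w (i + 1 + 1) - emE H w (i + 1))) U := by
    refine DifferentiableOn.add (emE_diff H one_pos (h1 1 one_pos)).differentiableOn ?_
    refine Complex.differentiableOn_tsum_of_summable_norm hsumK ?_ hUo hFle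
    intro i
    exact ((emE_diff H (by omega) (h1 _ (by omega))).sub
      (emE_diff H (by omega) (h1 _ (by omega)))).differentiableOn
  have hZt : ∀ w ∈ U, Tendsto (emE H w) atTop (𝓝 (emE H w 1 +
      ∑' i : ℕ, (emE H w (i + 1 + 1) - emE H w (i + 1)))) := by
    intro w hw
    have hsm : Summable (fun i : ℕ => emE H w (i + 1 + 1) - emE H w (i + 1)) :=
      Summable.of_norm_bounded hsumK (fun i => hFle i w hw)
    have ht := hsm.hasSum.tendsto_sum_nat.const_add (emE H w 1)
    rw [← tendsto_add_atTop_iff_nat 1]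
    refine ht.congr fun n => ?_
    rw [Finset.sum_range_sub (fun i => emE H w (i + 1))]
    simp
  have hEq : Set.EqOn (fun w => emE H w 1 +
      ∑' i : ℕ, (emE H w (i + 1 + 1) - emE H w (i + 1))) riemannZeta₁ U := by
    refine AnalyticOnNhd.eqOn_of_preconnected_of_eventuallyEq (hZd.analyticOnNhd hUo)
      (differentiable_riemannZeta₁.differentiableOn.analyticOnNhd hUo) hUc.isPreconnected
      (z₀ := 2) ?_ ?_
    · refine ⟨?_, ?_⟩
      · simp [hR]; linarith [norm_nonneg s]
      · simp; linarith
    · have hV : {w : ℂ | 1 < w.re} ∩ U ∈ 𝓝 (2:ℂ) := by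
        refine ((isOpen_lt continuous_const Complex.continuous_re).inter hUo).mem_nhds ⟨?_, ?_, ?_⟩
        · simp
        · simp [hR]; linarith [norm_nonneg s]
        · simp; linarith
      filter_upwards [hV] with w hw
      obtain ⟨C, -, hC⟩ := h2 w
      exact tendsto_nhds_unique (hZt w hw.2) (emE_tendsto H w hw.1 C hC)
  have hsU : -s ∈ U := by
    refine ⟨?_, ?_⟩
    · simp [hR]
    · simp; linarith
  have hlim : Tendsto (emE H (-s)) atTop (𝓝 (riemannZeta₁ (-s))) := by
    have := hZt (-s) hsU
    have h := hEq hsU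
    simp only at h
    rwa [h] at this
  set S := ∑' i : ℕ, 1 / ((i : ℝ) + 1) ^ 2 with hS
  have htail : ∀ n : ℕ, 0 < n → ‖riemannZeta₁ (-s) - emE H (-s) n‖
      ≤ K * S * (n : ℝ) ^ (s.re - 1) := by
    intro n hn
    have hn' : (0:ℝ) < n := by exact_mod_cast hn
    have hn1 : (1:ℝ) ≤ n := by exact_mod_cast hn
    have hl : Tendsto (fun p => ‖emE H (-s) (p + n) - emE H (-s) n‖) atTop
        (𝓝 ‖riemannZeta₁ (-s) - emE H (-s) n‖) :=
      (((tendsto_add_atTop_iff_nat n).mpr hlim).sub_const _).norm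
    refine le_of_tendsto' hl fun p => ?_
    have hts : emE H (-s) (p + n) - emE H (-s) n
        = ∑ i ∈ Finset.range p, (emE H (-s) (i + n + 1) - emE H (-s) (i + n)) := by
      have := Finset.sum_range_sub (fun i => emE H (-s) (i + n)) p
      simp only [zero_add] at this
      rw [← this]
      refine Finset.sum_congr rfl fun i _ => ?_
      rw [show i + 1 + n = i + n + 1 by ring]
    rw [hts]
    calc _ ≤ ∑ i ∈ Finset.range p, K * (n : ℝ) ^ (s.re - 1) * (1 / ((i : ℝ) + 1) ^ 2) := by
          refine norm_sum_le_of_le _ fun i _ => ?_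
          have hi : (0:ℝ) ≤ i := Nat.cast_nonneg i
          refine (hstep (-s) hsU (i + n) (by omega)).trans ?_
          rw [mul_assoc K ((n : ℝ) ^ (s.re - 1))]
          refine mul_le_mul_of_nonneg_left ?_ hK0
          have e : -(-s).re - ((J:ℝ) + 1) = (s.re + 1 - J) + (-2) := by simp; ring
          push_cast
          rw [e, Real.rpow_add (by linarith)]
          have b1 : ((i:ℝ) + n) ^ (s.re + 1 - J) ≤ (n : ℝ) ^ (s.re - 1) :=
            (Real.rpow_le_rpow_of_nonpos hn' (by linarith) (by linarith)).trans
              (Real.rpow_le_rpow_of_exponent_le hn1 (by linarith))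
          have b2 : ((i:ℝ) + n) ^ (-2 : ℝ) ≤ 1 / ((i : ℝ) + 1) ^ 2 := by
            refine (Real.rpow_le_rpow_of_nonpos (by linarith : 0 < (i:ℝ) + 1) (by linarith)
              (by norm_num)).trans (le_of_eq ?_)
            rw [Real.rpow_neg (by positivity), one_div]
            norm_cast
          gcongr
      _ = K * (n : ℝ) ^ (s.re - 1) * ∑ i ∈ Finset.range p, (1 / ((i : ℝ) + 1) ^ 2) := by
          rw [Finset.mul_sum]
      _ ≤ K * (n : ℝ) ^ (s.re - 1) * S := by
          gcongr
          exact hsum.sum_le_tsum _ (fun i _ => by positivity)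
      _ = _ := by ring
  obtain ⟨C, hC0, hC⟩ := h2 (-s)
  have hs1 : -s ≠ 1 := by
    intro h
    have := congrArg Complex.re h
    simp at this
    linarith
  have hs2 : -s - 1 ≠ 0 := sub_ne_zero.mpr hs1
  have hs3 : s + 1 ≠ 0 := by
    intro h
    exact hs2 (by linear_combination -h)
  refine ⟨‖(-s - 1)⁻¹‖ * (K * S) + C, fun n hn => ?_⟩
  have key : (∑ k ∈ Finset.Icc 1 n, (k : ℂ) ^ s) - riemannZeta (-s) - (n : ℂ) ^ (s + 1) / (s + 1)
      - (n : ℂ) ^ s / 2 = -((-s - 1)⁻¹ * (riemannZeta₁ (-s) - emE H (-s) n)) + H (-s) n := by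
    rw [riemannZeta_eq_inv_sub_mul hs1, emE, neg_neg, sub_neg_eq_add, add_comm 1 s]
    have : (-s - 1)⁻¹ = -(s + 1)⁻¹ := by rw [← inv_neg]; congr 1; ring
    rw [this]
    field_simp
    ring
  rw [key, add_mul]
  refine (norm_add_le _ _).trans (add_le_add ?_ ?_)
  · rw [norm_neg, norm_mul, mul_assoc]
    gcongr
    exact htail n hn
  · simpa using hC n hn

theorem euler_maclaurin_estimate (s : ℂ) (hs : 0 < s.re) :
    ∃ C : ℝ, ∀ n : ℕ, 0 < n →
      ‖(∑ k ∈ Finset.Icc 1 n, (k : ℂ) ^ s) - riemannZeta (-s) -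
          ((n : ℂ) + 1 / 2) ^ (s + 1) / (s + 1)‖ ≤ C * (n : ℝ) ^ (s.re - 1) := by
  obtain ⟨C₁, h₁⟩ := em_main s hs
  obtain ⟨C₂, h₂⟩ := em_taylor s hs
  refine ⟨C₁ + C₂, fun n hn => ?_⟩
  rw [add_mul]
  refine le_trans (le_of_eq ?_) ((norm_sub_le _ _).trans (add_le_add (h₁ n hn) (h₂ n hn)))
  congr 1
  ring
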